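/- Product of mild functions: Let r be a positive integer or +∞ and suppose f_1,…,f_l : U → ℝ, with U ⊂ ℝ^d open, are each (A,B,C)-mild up to order r for some A,B > 0 and C ≥ 0. Then the pointwise product f_1⋯f_l is (lA, B^l, C)-mild up to order r. -/

import Mathlib

/-!
The product of an `(a, P, C)`-mild function and a `(b, Q, C)`-mild function is
`(a + b, P Q, C)`-mild (`MildUpTo.mul`); since the constant `1` is `(0, 1, C)`-mild, the theorem
follows by induction on the number of factors.

For the product of two functions, the Leibniz rule (`jet_mul`) writes the derivative of `f g` along
a list `L` of directions as the sum, over all ways of distributing the entries of `L` into two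
sublists `(L₁, L₂)`, of the derivative of `f` along `L₁` times that of `g` along `L₂`. With
`|L₁| = m` and `|L₂| = k`, such a term is at most
`(P Q)^(C+1) a^m b^k (m! k!)^(C+1) ≤ (P Q)^(C+1) a^m b^k ((m+k)!)^(C+1)`, and the sum of `a^m b^k`
over all distributions is `(a + b)^|L|`. Sublists of the direction list of a multi-index are again
direction lists of multi-indices, so the mildness bounds do apply to `L₁` and `L₂`.
-/

open Set

noncomputable section

/-- The list of coordinate directions (with multiplicities) associated to a
multi-index `ν ∈ ℕ^d`. -/
def mDirs {d : ℕ} (ν : Fin d → ℕ) : List (Fin d → ℝ) :=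
  (List.finRange d).flatMap fun i => List.replicate (ν i) (Pi.single i 1)

/-- The partial derivative `f^{(ν)}` of `f : ℝ^d → ℝ` (computed within the set `U`) at `x`,
realized as the iterated derivative of order `|ν|` in the coordinate directions given by `ν`. -/
def pderivW {d : ℕ} (U : Set (Fin d → ℝ)) (f : (Fin d → ℝ) → ℝ) (ν : Fin d → ℕ)
    (x : Fin d → ℝ) : ℝ :=
  iteratedFDerivWithin ℝ (∑ i, ν i) f U x (fun j => (mDirs ν).getD (j : ℕ) 0)

/-- `f` is `(A,B,C)`-mild up to order `r` on `U`. -/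
def MildUpTo {d : ℕ} (r : ℕ∞) (U : Set (Fin d → ℝ)) (f : (Fin d → ℝ) → ℝ)
    (A B C : ℝ) : Prop :=
  ContDiffOn ℝ r f U ∧ ∀ ν : Fin d → ℕ, (∑ i, ν i : ℕ∞) ≤ r → ∀ x ∈ U,
    |pderivW U f ν x| ≤ B ^ (C + 1) * A ^ (∑ i, ν i) * (Nat.factorial (∑ i, ν i) : ℝ) ^ (C + 1)

/-- `f` is `(A,B,C)`-mild on `U`. -/
def Mild {d : ℕ} (U : Set (Fin d → ℝ)) (f : (Fin d → ℝ) → ℝ) (A B C : ℝ) : Prop :=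
  MildUpTo ⊤ U f A B C

/-- `f` is weakly `(A,B,C)`-mild up to order `r` on `U ⊆ (0,1)^d`. -/
def WeaklyMildUpTo {d : ℕ} (r : ℕ∞) (U : Set (Fin d → ℝ)) (f : (Fin d → ℝ) → ℝ)
    (A B C : ℝ) : Prop :=
  ContDiffOn ℝ r f U ∧ ∀ ν : Fin d → ℕ, (∑ i, ν i : ℕ∞) ≤ r → ∀ x ∈ U,
    |pderivW U f ν x| ≤
      B ^ (C + 1) * A ^ (∑ i, ν i) * (Nat.factorial (∑ i, ν i) : ℝ) ^ (C + 1) /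
        ∏ i, (x i) ^ (ν i)

/-- `f` is weakly `(A,B,C)`-mild on `U`. -/
def WeaklyMild {d : ℕ} (U : Set (Fin d → ℝ)) (f : (Fin d → ℝ) → ℝ) (A B C : ℝ) : Prop :=
  WeaklyMildUpTo ⊤ U f A B C

/-- `f` is a Gevrey function of class `α` on `U`. -/
def Gevrey {d : ℕ} (U : Set (Fin d → ℝ)) (f : (Fin d → ℝ) → ℝ) (α : ℝ) : Prop :=
  ContDiffOn ℝ (⊤ : ℕ∞) f U ∧ ∃ M R : ℝ, 0 < M ∧ 0 < R ∧ ∀ ν : Fin d → ℕ, ∀ x ∈ U,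
    |pderivW U f ν x| ≤ (M * (Nat.factorial (∑ i, ν i) : ℝ) / R ^ (∑ i, ν i)) ^ α

/-! ### Iterated derivatives along a list of directions -/

/-- The iterated derivative of `f` within `U` along the list of directions `L`; the head of the
list is the direction of the last differentiation. -/
def jet {d : ℕ} (U : Set (Fin d → ℝ)) (f : (Fin d → ℝ) → ℝ) (L : List (Fin d → ℝ))
    (x : Fin d → ℝ) : ℝ :=
  iteratedFDerivWithin ℝ L.length f U x (fun j => L.getD (j : ℕ) 0)

theorem length_mDirs {d : ℕ} (ν : Fin d → ℕ) : (mDirs ν).length = ∑ i, ν i := by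
  simp [mDirs, List.length_flatMap, ← List.ofFn_eq_map, List.sum_ofFn]

theorem pderivW_eq_jet {d : ℕ} (U : Set (Fin d → ℝ)) (f : (Fin d → ℝ) → ℝ) (ν : Fin d → ℕ)
    (x : Fin d → ℝ) : pderivW U f ν x = jet U f (mDirs ν) x := by
  unfold pderivW jet
  rw [← length_mDirs ν]

theorem differentiableWithinAt_jet {d : ℕ} {r : ℕ∞} {U : Set (Fin d → ℝ)} (hU : IsOpen U)
    {f : (Fin d → ℝ) → ℝ} (hf : ContDiffOn ℝ r f U) {L : List (Fin d → ℝ)}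
    (hL : (L.length : ℕ∞) < r) {x : Fin d → ℝ} (hx : x ∈ U) :
    DifferentiableWithinAt ℝ (jet U f L) U x :=
  (hf.differentiableOn_iteratedFDerivWithin (m := L.length) (by exact_mod_cast hL)
    hU.uniqueDiffOn x hx).continuousMultilinear_apply_const _

theorem jet_cons {d : ℕ} {r : ℕ∞} {U : Set (Fin d → ℝ)} (hU : IsOpen U)
    {f : (Fin d → ℝ) → ℝ} (hf : ContDiffOn ℝ r f U) {L : List (Fin d → ℝ)}
    (hL : (L.length : ℕ∞) < r) {x : Fin d → ℝ} (hx : x ∈ U) (v : Fin d → ℝ) :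
    jet U f (v :: L) x = fderivWithin ℝ (jet U f L) U x v := by
  have h := hf.differentiableOn_iteratedFDerivWithin (m := L.length) (by exact_mod_cast hL)
    hU.uniqueDiffOn x hx
  exact (fderivWithin_continuousMultilinear_apply_const_apply (hU.uniqueDiffOn x hx) h
    (fun j : Fin L.length => L.getD (j : ℕ) 0) v).symm

/-! ### The Leibniz rule -/

/-- All ways of distributing the entries of a list into two sublists, with multiplicity. -/
def splits {α : Type*} : List α → List (List α × List α)
  | [] => [([], [])]
  | v :: L => (splits L).map (fun p => (v :: p.1, p.2)) ++ (splits L).map (fun p => (p.1, v :: p.2))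

theorem splits_sublist {α : Type*} (L : List α) :
    ∀ p ∈ splits L, p.1.Sublist L ∧ p.2.Sublist L ∧ p.1.length + p.2.length = L.length := by
  induction L with
  | nil => simp [splits]
  | cons v L ih =>
    intro p hp
    simp only [splits, List.mem_append, List.mem_map] at hp
    rcases hp with ⟨q, hq, rfl⟩ | ⟨q, hq, rfl⟩
    all_goals
      obtain ⟨h1, h2, h3⟩ := ih q hq
      refine ⟨?_, ?_, ?_⟩
    · exact h1.cons_cons v
    · exact h2.cons v
    · simp; omega
    · exact h1.cons v
    · exact h2.cons_cons v
    · simp; omega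

theorem sum_splits_pow {α : Type*} (a b : ℝ) (L : List α) :
    ((splits L).map fun p => a ^ p.1.length * b ^ p.2.length).sum = (a + b) ^ L.length := by
  induction L with
  | nil => simp [splits]
  | cons v L ih =>
    have h1 : ∀ p : List α × List α, a ^ (p.1.length + 1) * b ^ p.2.length
        = a * (a ^ p.1.length * b ^ p.2.length) := fun p => by ring
    have h2 : ∀ p : List α × List α, a ^ p.1.length * b ^ (p.2.length + 1)
        = b * (a ^ p.1.length * b ^ p.2.length) := fun p => by ring
    simp only [splits, List.map_append, List.map_map, List.sum_append, Function.comp_def,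
      List.length_cons, h1, h2, List.sum_map_mul_left, ih]
    ring

theorem hasFDerivWithinAt_list_sum {E ι : Type*} [NormedAddCommGroup E] [NormedSpace ℝ E]
    {U : Set E} {x : E} (F : ι → E → ℝ) (F' : ι → E →L[ℝ] ℝ) (S : List ι)
    (h : ∀ p ∈ S, HasFDerivWithinAt (F p) (F' p) U x) :
    HasFDerivWithinAt (fun y => (S.map fun p => F p y).sum) (S.map F').sum U x := by
  induction S with
  | nil => simpa using hasFDerivWithinAt_const (0 : ℝ) x U
  | cons p S ih =>
    simp only [List.map_cons, List.sum_cons]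
    exact (h p (by simp)).add (ih fun q hq => h q (by simp [hq]))

theorem list_sum_apply {E ι : Type*} [NormedAddCommGroup E] [NormedSpace ℝ E]
    (F' : ι → E →L[ℝ] ℝ) (S : List ι) (v : E) :
    (S.map F').sum v = (S.map fun p => F' p v).sum := by
  induction S with
  | nil => simp
  | cons p S ih => simp [ih]

theorem jet_mul {d : ℕ} {r : ℕ∞} {U : Set (Fin d → ℝ)} (hU : IsOpen U)
    {f g : (Fin d → ℝ) → ℝ} (hf : ContDiffOn ℝ r f U) (hg : ContDiffOn ℝ r g U)
    (L : List (Fin d → ℝ)) (hL : (L.length : ℕ∞) ≤ r) :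
    ∀ x ∈ U, jet U (fun y => f y * g y) L x =
      ((splits L).map fun p => jet U f p.1 x * jet U g p.2 x).sum := by
  induction L with
  | nil => intro x hx; simp [jet, splits]
  | cons v L ih =>
    intro x hx
    have hlt : (L.length : ℕ∞) < r :=
      lt_of_lt_of_le (by exact_mod_cast Nat.lt_succ_self _) hL
    have hlt' : ∀ M : List (Fin d → ℝ), M.Sublist L → (M.length : ℕ∞) < r := fun M hM =>
      lt_of_le_of_lt (by exact_mod_cast hM.length_le) hlt
    rw [jet_cons hU (hf.mul hg) hlt hx,
      fderivWithin_congr (ih hlt.le) (ih hlt.le x hx)]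
    have hD := hasFDerivWithinAt_list_sum (U := U) (x := x)
      (fun (p : List (Fin d → ℝ) × List (Fin d → ℝ)) y => jet U f p.1 y * jet U g p.2 y)
      (fun p => jet U f p.1 x • fderivWithin ℝ (jet U g p.2) U x
        + jet U g p.2 x • fderivWithin ℝ (jet U f p.1) U x) (splits L) (fun p hp => by
        obtain ⟨h1, h2, -⟩ := splits_sublist L p hp
        exact (differentiableWithinAt_jet hU hf (hlt' _ h1) hx).hasFDerivWithinAt.mul
          (differentiableWithinAt_jet hU hg (hlt' _ h2) hx).hasFDerivWithinAt)
    rw [hD.fderivWithin (hU.uniqueDiffOn x hx), list_sum_apply]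
    simp only [splits, List.map_append, List.map_map, List.sum_append, Function.comp_def]
    rw [← List.sum_map_add]
    refine congrArg List.sum (List.map_congr_left fun p hp => ?_)
    obtain ⟨h1, h2, -⟩ := splits_sublist L p hp
    rw [jet_cons hU hf (hlt' _ h1) hx, jet_cons hU hg (hlt' _ h2) hx]
    simp only [add_apply, smul_apply, smul_eq_mul]
    ring

/-! ### Mildness of products -/

theorem sublist_flatMap_replicate {ι α : Type*} (e : ι → α) (ν : ι → ℕ) (l : List ι)
    (hl : l.Nodup) (M : List α)
    (hM : M.Sublist (l.flatMap fun i => List.replicate (ν i) (e i))) :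
    ∃ μ : ι → ℕ, M = l.flatMap fun i => List.replicate (μ i) (e i) := by
  classical
  induction l generalizing M with
  | nil => exact ⟨ν, by simpa using hM⟩
  | cons i l ih =>
    rw [List.flatMap_cons, List.sublist_append_iff] at hM
    obtain ⟨M₁, M₂, rfl, h1, h2⟩ := hM
    obtain ⟨n, -, rfl⟩ := List.sublist_replicate_iff.1 h1
    obtain ⟨hi, hl'⟩ := List.nodup_cons.1 hl
    obtain ⟨μ, rfl⟩ := ih hl' M₂ h2
    refine ⟨Function.update μ i n, ?_⟩
    rw [List.flatMap_cons, Function.update_self]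
    refine congrArg _ (List.flatMap_congr fun j hj => ?_)
    rw [Function.update_of_ne (by rintro rfl; exact hi hj)]

/-- The mildness bound holds along every sublist of the direction list of a multi-index, since
such a sublist is itself the direction list of a multi-index. -/
theorem MildUpTo.abs_jet_le {d : ℕ} {r : ℕ∞} {U : Set (Fin d → ℝ)} {f : (Fin d → ℝ) → ℝ}
    {A B C : ℝ} (hf : MildUpTo r U f A B C) {ν : Fin d → ℕ} {M : List (Fin d → ℝ)}
    (hM : M.Sublist (mDirs ν)) (hr : (M.length : ℕ∞) ≤ r) {x : Fin d → ℝ} (hx : x ∈ U) :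
    |jet U f M x| ≤ B ^ (C + 1) * A ^ M.length * (Nat.factorial M.length : ℝ) ^ (C + 1) := by
  obtain ⟨μ, hμ⟩ := sublist_flatMap_replicate _ ν _ (List.nodup_finRange d) M hM
  have hμ : M = mDirs μ := hμ
  subst hμ
  have h := hf.2 μ (by rw [length_mDirs] at hr; exact_mod_cast hr) x hx
  rwa [pderivW_eq_jet, ← length_mDirs] at h

theorem abs_list_sum_le (S : List ℝ) : |S.sum| ≤ (S.map fun t => |t|).sum := by
  induction S with
  | nil => simp
  | cons t S ih =>
    simp only [List.map_cons, List.sum_cons]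
    exact (abs_add_le _ _).trans (by gcongr)

theorem MildUpTo.mul {d : ℕ} {r : ℕ∞} {U : Set (Fin d → ℝ)} (hU : IsOpen U)
    {f g : (Fin d → ℝ) → ℝ} {a b P Q C : ℝ} (ha : 0 ≤ a) (hb : 0 ≤ b) (hP : 0 ≤ P) (hQ : 0 ≤ Q)
    (hC : 0 ≤ C) (hf : MildUpTo r U f a P C) (hg : MildUpTo r U g b Q C) :
    MildUpTo r U (fun x => f x * g x) (a + b) (P * Q) C := by
  refine ⟨hf.1.mul hg.1, fun ν hν x hx => ?_⟩
  have hlen : ((mDirs ν).length : ℕ∞) ≤ r := by rw [length_mDirs]; exact_mod_cast hν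
  rw [pderivW_eq_jet, jet_mul hU hf.1 hg.1 _ hlen x hx, ← length_mDirs, ← sum_splits_pow]
  rw [mul_right_comm, ← List.sum_map_mul_left]
  refine (abs_list_sum_le _).trans ?_
  rw [List.map_map]
  refine List.sum_le_sum fun p hp => ?_
  obtain ⟨h1, h2, h3⟩ := splits_sublist _ p hp
  have hle : ∀ M : List (Fin d → ℝ), M.Sublist (mDirs ν) → (M.length : ℕ∞) ≤ r := fun M hM =>
    le_trans (by exact_mod_cast hM.length_le) hlen
  have b1 := hf.abs_jet_le h1 (hle _ h1) hx
  have b2 := hg.abs_jet_le h2 (hle _ h2) hx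
  have hfac : ((Nat.factorial p.1.length : ℝ)) ^ (C + 1) * (Nat.factorial p.2.length : ℝ) ^ (C + 1)
      ≤ (Nat.factorial (mDirs ν).length : ℝ) ^ (C + 1) := by
    rw [← Real.mul_rpow (by positivity) (by positivity), ← h3]
    refine Real.rpow_le_rpow (by positivity) ?_ (by linarith)
    exact_mod_cast Nat.le_of_dvd (Nat.factorial_pos _)
      (Nat.factorial_mul_factorial_dvd_factorial_add _ _)
  simp only [Function.comp_apply, abs_mul]
  calc |jet U f p.1 x| * |jet U g p.2 x|
      ≤ (P ^ (C + 1) * a ^ p.1.length * (Nat.factorial p.1.length : ℝ) ^ (C + 1)) *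
        (Q ^ (C + 1) * b ^ p.2.length * (Nat.factorial p.2.length : ℝ) ^ (C + 1)) := by
        gcongr
    _ = P ^ (C + 1) * Q ^ (C + 1) * ((Nat.factorial p.1.length : ℝ) ^ (C + 1) *
        (Nat.factorial p.2.length : ℝ) ^ (C + 1)) * (a ^ p.1.length * b ^ p.2.length) := by ring
    _ ≤ P ^ (C + 1) * Q ^ (C + 1) * (Nat.factorial (mDirs ν).length : ℝ) ^ (C + 1) *
        (a ^ p.1.length * b ^ p.2.length) := by gcongr
    _ = _ := by rw [Real.mul_rpow hP hQ]

theorem mildUpTo_one {d : ℕ} (r : ℕ∞) (U : Set (Fin d → ℝ)) (C : ℝ) :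
    MildUpTo r U (fun _ => (1 : ℝ)) 0 1 C := by
  refine ⟨contDiffOn_const, fun ν _ x _ => ?_⟩
  unfold pderivW
  generalize (mDirs ν) = L
  generalize (∑ i, ν i) = n
  cases n with
  | zero => simp
  | succ n =>
    rw [iteratedFDerivWithin_const_of_ne n.succ_ne_zero]
    simp

/-- the product of `l` functions that are `(A,B,C)`-mild up to order `r`
is `(lA, B^l, C)`-mild up to order `r`. -/
theorem mild_prod {d : ℕ} (r : ℕ∞) (hr : 1 ≤ r)
    (U : Set (Fin d → ℝ)) (hU : IsOpen U)
    (l : ℕ) (f : Fin l → (Fin d → ℝ) → ℝ)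
    (A B C : ℝ) (hA : 0 < A) (hB : 0 < B) (hC : 0 ≤ C)
    (hf : ∀ i : Fin l, MildUpTo r U (f i) A B C) :
    MildUpTo r U (fun x => ∏ i, f i x) (l * A) (B ^ l) C := by
  clear hr
  induction l with
  | zero => simpa using mildUpTo_one r U C
  | succ l ih =>
    have h := MildUpTo.mul hU (by positivity) hA.le (by positivity) hB.le hC
      (ih (fun i => f i.castSucc) fun i => hf i.castSucc) (hf (Fin.last l))
    simp only [Fin.prod_univ_castSucc]
    rw [pow_succ, show ((l + 1 : ℕ) : ℝ) * A = l * A + A by push_cast; ring]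
    exact h
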